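/- arXiv:1209.3510 — 3 statements merged into one kernel-verified Lean document; each statement's English description precedes it below -/
import Mathlib

section
/- Let U ⊆ ℝ³ be open and let e_j : U → ℝ³ (j = 1,2,3) be a continuously differentiable frame, i.e. e₁(x), e₂(x), e₃(x) are linearly independent at every x ∈ U. Set σ^α(x) := Σ_{j=1}^{3} e_j^α(x) s^j, g^{αβ}(x) := Σ_{j=1}^{3} e_j^α(x) e_j^β(x), h⁺(x,ξ) := √(Σ_{α,β} g^{αβ}(x) ξ_α ξ_β), and let c(x) := sign of the determinant of the 3×3 matrix whose j-th row is e_j(x). Let g_{αβ}(x) be the inverse matrix of g^{αβ}(x), let the coframe e^k : U → ℝ³ be defined by Σ_α e_j^α e^k_α = δ_j^k, define (curl e^j)_β := (1/2) √(det g_{μν}) Σ_{γ,δ,μ,ν} ε_{γδβ} g^{γμ} g^{δν} (∂e^j_ν/∂x^μ − ∂e^j_μ/∂x^ν) (ε the totally antisymmetric symbol with ε₁₂₃ = 1), and set *T^{αβ} := Σ_{j,γ} e_j^α g^{βγ} (curl e^j)_γ. Suppose V is an open subset of U × (ℝ³ \ {0}) and v⁺ : V → ℂ² is continuously differentiable with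 ‖v⁺(x,ξ)‖ = 1 and Σ_α ξ_α σ^α(x) v⁺(x,ξ) = h⁺(x,ξ) v⁺(x,ξ) for all (x,ξ) ∈ V. Then at every point (x,ξ) ∈ V: −i Σ_{α=1}^{3} [ (∂v⁺/∂x^α)^* (∂v⁺/∂ξ_α) − (∂v⁺/∂ξ_α)^* (∂v⁺/∂x^α) ] = (c(x)/2) · (Σ_{α,β} *T^{αβ}(x) ξ_α ξ_β) / (Σ_{μ,ν} g^{μν}(x) ξ_μ ξ_ν)^{3/2}. -/
open Complex Matrix BigOperators

noncomputable section

/-- The Pauli matrices s¹, s², s³. -/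
def pauli : Fin 3 → Matrix (Fin 2) (Fin 2) ℂ :=
  ![!![0, 1; 1, 0], !![0, -Complex.I; Complex.I, 0], !![1, 0; 0, -1]]

/-- The totally antisymmetric symbol ε on three indices, ε₀₁₂ = 1. -/
def eps (i j k : Fin 3) : ℝ :=
  ((((j : ℤ) - (i : ℤ)) * (((k : ℤ) - (j : ℤ))) * (((k : ℤ) - (i : ℤ))) : ℤ) : ℝ) / 2

/-- The contravariant metric g^{αβ} = Σ_j e_j^α e_j^β generated by a frame e. -/
def gM (e : (Fin 3 → ℝ) → Fin 3 → Fin 3 → ℝ) (x : Fin 3 → ℝ) : Matrix (Fin 3) (Fin 3) ℝ :=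
  Matrix.of fun α β => ∑ j, e x j α * e x j β

/-- (curl e^j)_β at x, for a coframe f (f x k α = e^k_α(x)). -/
def curlCoframe (e : (Fin 3 → ℝ) → Fin 3 → Fin 3 → ℝ)
    (f : (Fin 3 → ℝ) → Fin 3 → Fin 3 → ℝ) (x : Fin 3 → ℝ) (j β : Fin 3) : ℝ :=
  (1 / 2) * Real.sqrt ((gM e x)⁻¹.det) *
    ∑ γ, ∑ δ, ∑ μ, ∑ ν, eps γ δ β * gM e x γ μ * gM e x δ ν *
      (fderiv ℝ (fun y => f y j ν) x (Pi.single μ 1)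
        - fderiv ℝ (fun y => f y j μ) x (Pi.single ν 1))

/-- The Hodge-dualized torsion *T^{αβ} = Σ_{j,γ} e_j^α g^{βγ} (curl e^j)_γ. -/
def starT (e : (Fin 3 → ℝ) → Fin 3 → Fin 3 → ℝ)
    (f : (Fin 3 → ℝ) → Fin 3 → Fin 3 → ℝ) (x : Fin 3 → ℝ) (α β : Fin 3) : ℝ :=
  ∑ j, ∑ γ, e x j α * gM e x β γ * curlCoframe e f x j γ

/-- The topological charge c(x) = sgn det(e_j^α(x)). -/
def charge (e : (Fin 3 → ℝ) → Fin 3 → Fin 3 → ℝ) (x : Fin 3 → ℝ) : ℝ :=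
  Real.sign (Matrix.of (e x) : Matrix (Fin 3) (Fin 3) ℝ).det

/-!
A unit eigenspinor `v⁺` of `Σ_j η_j sʲ`, where `η_j = Σ_α e_j^α ξ_α`, has Bloch vector `n = η / h⁺`,
and for any family of unit spinors `2 Im (∂_a v^* ∂_b v) = ½ n · (∂_a n × ∂_b n)`. Triple products
are insensitive to the derivatives of `h⁺`, so the left-hand side equals
`Σ_α η · (∂η/∂x^α × ∂η/∂ξ_α) / (2 (h⁺)³)`.

With `E` and `F` the matrices of frame and coframe, `g = Eᵀ E` turns the contraction of `*T` with
`ξ ⊗ ξ` into `√(det g⁻¹) det E = c` times triple products containing `E (∂F)ᵀ η`. Differentiating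
`E Fᵀ = 1` gives `E (∂F)ᵀ η = -(∂E) ξ`, and `(∂E) ξ` is the `x`-derivative of `η`.
-/

open Filter Topology

section TripleProduct

variable {R : Type*} [CommRing R]

lemma triple_product_mulVec (M : Matrix (Fin 3) (Fin 3) R) (u v w : Fin 3 → R) :
    (M *ᵥ u) ⬝ᵥ (M *ᵥ v) ⨯₃ (M *ᵥ w) = M.det * (u ⬝ᵥ v ⨯₃ w) := by
  have hrows : Matrix.of ![M *ᵥ u, M *ᵥ v, M *ᵥ w] = Matrix.of ![u, v, w] * Mᵀ := by
    ext i j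
    fin_cases i <;> simp [Matrix.mul_apply, mulVec, dotProduct, mul_comm]
  rw [triple_product_eq_det, triple_product_eq_det]
  exact (congrArg det hrows).trans ((det_mul _ _).trans (by rw [det_transpose, mul_comm]; rfl))

lemma triple_product_smul_of_add_smul (h c d : R) (n a b : Fin 3 → R) :
    (h • n) ⬝ᵥ (c • n + h • a) ⨯₃ (d • n + h • b) = h ^ 3 * (n ⬝ᵥ a ⨯₃ b) := by
  simp only [map_add, map_smul, LinearMap.add_apply, LinearMap.smul_apply, cross_self,
    smul_dotProduct, dotProduct_add, dotProduct_smul, dot_self_cross, dot_cross_self, smul_eq_mul,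
    dotProduct_zero]
  ring

end TripleProduct

section HermitianForm

variable {ι : Type*} [Fintype ι]

lemma star_dotProduct_self_eq_sum_normSq (v : ι → ℂ) :
    star v ⬝ᵥ v = ((∑ i, normSq (v i) : ℝ) : ℂ) := by
  simp only [dotProduct, Pi.star_apply, star_def, ofReal_sum, normSq_eq_conj_mul_self]

lemma neg_I_mul_star_dotProduct_sub (a b : ι → ℂ) :
    -I * (star a ⬝ᵥ b - star b ⬝ᵥ a) = ((2 * (star a ⬝ᵥ b).im : ℝ) : ℂ) := by
  rw [star_dotProduct b a, star_def, sub_conj]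
  linear_combination (-(2 * (star a ⬝ᵥ b).im : ℝ) : ℂ) * I_mul_I

/-- The real part `Re (u^* A w)` of a sesquilinear form, as a real-bilinear form. -/
def reForm (A : Matrix ι ι ℂ) : (ι → ℂ) →ₗ[ℝ] (ι → ℂ) →ₗ[ℝ] ℝ :=
  LinearMap.mk₂ ℝ (fun u w => (star u ⬝ᵥ A *ᵥ w).re)
    (fun u₁ u₂ w => by simp only [star_add, add_dotProduct, add_re])
    (fun c u w => by simp only [star_smul, star_trivial, smul_dotProduct, smul_re])
    (fun u w₁ w₂ => by simp only [mulVec_add, dotProduct_add, add_re])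
    (fun c u w => by simp only [mulVec_smul, dotProduct_smul, smul_re])

lemma reForm_apply (A : Matrix ι ι ℂ) (u w : ι → ℂ) :
    reForm A u w = (star u ⬝ᵥ A *ᵥ w).re := rfl

lemma star_mulVec_dotProduct_of_isHermitian {A : Matrix ι ι ℂ} (hA : A.IsHermitian)
    (u w : ι → ℂ) : star (A *ᵥ u) ⬝ᵥ w = star u ⬝ᵥ A *ᵥ w := by
  rw [star_mulVec, hA.eq, dotProduct_mulVec]

lemma reForm_comm {A : Matrix ι ι ℂ} (hA : A.IsHermitian) (u w : ι → ℂ) :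
    reForm A u w = reForm A w u := by
  rw [reForm_apply, reForm_apply, ← star_mulVec_dotProduct_of_isHermitian hA, star_dotProduct]
  exact conj_re _

lemma fderiv_reForm_self {X : Type*} [NormedAddCommGroup X] [NormedSpace ℝ X]
    {A : Matrix ι ι ℂ} (hA : A.IsHermitian) {v : X → ι → ℂ} {p : X}
    (hv : DifferentiableAt ℝ v p) (d : X) :
    fderiv ℝ (fun q => reForm A (v q) (v q)) p d = 2 * reForm A (v p) (fderiv ℝ v p d) := by
  have h := DFunLike.congr_fun ((reForm A).toContinuousBilinearMap.fderiv_of_bilinear hv hv) d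
  rw [two_mul]
  nth_rw 2 [reForm_comm hA]
  exact h

lemma differentiableAt_reForm_self {X : Type*} [NormedAddCommGroup X] [NormedSpace ℝ X]
    (A : Matrix ι ι ℂ) {v : X → ι → ℂ} {p : X} (hv : DifferentiableAt ℝ v p) :
    DifferentiableAt ℝ (fun q => reForm A (v q) (v q)) p :=
  ((reForm A).toContinuousBilinearMap.hasFDerivAt_of_bilinear
    hv.hasFDerivAt hv.hasFDerivAt).differentiableAt

lemma re_star_dotProduct_fderiv_eq_zero {X : Type*} [NormedAddCommGroup X] [NormedSpace ℝ X]
    {v : X → ι → ℂ} {p : X} {c : ℝ} (hv : DifferentiableAt ℝ v p)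
    (hnorm : ∀ᶠ q in 𝓝 p, ∑ i, normSq (v q i) = c) (d : X) :
    (star (v p) ⬝ᵥ fderiv ℝ v p d).re = 0 := by
  classical
  have hconst : (fun q => reForm 1 (v q) (v q)) =ᶠ[𝓝 p] fun _ => c := by
    filter_upwards [hnorm] with q hq
    rw [reForm_apply, one_mulVec, star_dotProduct_self_eq_sum_normSq, ofReal_re, hq]
  have hd := fderiv_reForm_self isHermitian_one hv d
  rw [hconst.fderiv_eq, fderiv_fun_const, reForm_apply, one_mulVec] at hd
  simpa using hd.symm

end HermitianForm

section Spinor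

lemma isHermitian_pauli (j : Fin 3) : (pauli j).IsHermitian := by
  fin_cases j <;> ext i k <;> fin_cases i <;> fin_cases k <;> simp [pauli]

lemma pauli_mul_sum_add_sum_mul_pauli (c : Fin 3 → ℂ) (j : Fin 3) :
    pauli j * ∑ k, c k • pauli k + (∑ k, c k • pauli k) * pauli j = (2 * c j) • 1 := by
  ext a b
  fin_cases j <;> fin_cases a <;> fin_cases b <;>
    simp [pauli, Fin.sum_univ_three, Matrix.add_apply] <;> ring_nf <;> simp

/-- The vector `(Re (u^* sʲ w))_j`; for `u = w` it is the Bloch vector of a spinor. -/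
def pauliVec (u w : Fin 2 → ℂ) : Fin 3 → ℝ := fun j => reForm (pauli j) u w

lemma normSq_smul_eq_smul_pauliVec {η : Fin 3 → ℝ} {h : ℝ} {v : Fin 2 → ℂ}
    (heig : (∑ j, (η j : ℂ) • pauli j) *ᵥ v = (h : ℂ) • v) :
    (∑ i, normSq (v i)) • η = h • pauliVec v v := by
  ext j
  set A := ∑ j, (η j : ℂ) • pauli j with hA
  have hAherm : A.IsHermitian :=
    isSelfAdjoint_sum _ fun k _ => (isHermitian_pauli k).smul (conj_ofReal (η k))
  have hleft : star v ⬝ᵥ (pauli j * A) *ᵥ v = h * (star v ⬝ᵥ pauli j *ᵥ v) := by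
    rw [← mulVec_mulVec, heig, mulVec_smul, dotProduct_smul, smul_eq_mul]
  have hright : star v ⬝ᵥ (A * pauli j) *ᵥ v = h * (star v ⬝ᵥ pauli j *ᵥ v) := by
    rw [← mulVec_mulVec, ← star_mulVec_dotProduct_of_isHermitian hAherm, heig, star_smul,
      smul_dotProduct, star_def, conj_ofReal, smul_eq_mul]
  -- The Clifford relation `sʲ A + A sʲ = 2 η_j`, taken between `v^*` and `v`.
  have hclifford : (2 * η j : ℂ) * (star v ⬝ᵥ v) = 2 * (h * (star v ⬝ᵥ pauli j *ᵥ v)) := by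
    rw [two_mul (_ * _)]
    nth_rw 1 [← hleft]
    rw [← hright, ← dotProduct_add, ← add_mulVec, hA, pauli_mul_sum_add_sum_mul_pauli, smul_mulVec,
      one_mulVec, dotProduct_smul, smul_eq_mul]
  rw [star_dotProduct_self_eq_sum_normSq] at hclifford
  have hre := congrArg re hclifford
  simp only [mul_re, ofReal_re, ofReal_im, re_ofNat, im_ofNat, mul_im] at hre
  simp only [Pi.smul_apply, smul_eq_mul, pauliVec, reForm_apply]
  linarith

lemma pauliVec_triple_product (v a b : Fin 2 → ℂ) :
    pauliVec v v ⬝ᵥ pauliVec v a ⨯₃ pauliVec v b =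
      (star v ⬝ᵥ v).re * ((star v ⬝ᵥ v).re * (star a ⬝ᵥ b).im -
        ((star v ⬝ᵥ a).re * (star v ⬝ᵥ b).im - (star v ⬝ᵥ a).im * (star v ⬝ᵥ b).re)) := by
  rw [cross_apply, vec3_dotProduct]
  simp [pauliVec, reForm_apply, pauli, dotProduct, Fin.sum_univ_two, mulVec]
  ring

variable {X : Type*} [NormedAddCommGroup X] [NormedSpace ℝ X]

lemma differentiableAt_pauliVec_self {v : X → Fin 2 → ℂ} {p : X} (hv : DifferentiableAt ℝ v p) :
    DifferentiableAt ℝ (fun q => pauliVec (v q) (v q)) p :=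
  differentiableAt_pi.2 fun j => differentiableAt_reForm_self (pauli j) hv

lemma fderiv_pauliVec_self {v : X → Fin 2 → ℂ} {p : X} (hv : DifferentiableAt ℝ v p) (d : X) :
    fderiv ℝ (fun q => pauliVec (v q) (v q)) p d = (2 : ℝ) • pauliVec (v p) (fderiv ℝ v p d) := by
  ext j
  exact (DFunLike.congr_fun (fderiv_apply (differentiableAt_pauliVec_self hv) j) d).symm.trans
    (fderiv_reForm_self (isHermitian_pauli j) hv d)

lemma pauliVec_triple_product_fderiv {v : X → Fin 2 → ℂ} {p : X} (hv : DifferentiableAt ℝ v p)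
    (hnorm : ∀ᶠ q in 𝓝 p, ∑ i, normSq (v q i) = 1) (a b : X) :
    pauliVec (v p) (v p) ⬝ᵥ fderiv ℝ (fun q => pauliVec (v q) (v q)) p a ⨯₃
        fderiv ℝ (fun q => pauliVec (v q) (v q)) p b =
      4 * (star (fderiv ℝ v p a) ⬝ᵥ fderiv ℝ v p b).im := by
  have hunit : (star (v p) ⬝ᵥ v p).re = 1 := by
    rw [star_dotProduct_self_eq_sum_normSq, hnorm.self_of_nhds, ofReal_re]
  simp only [fderiv_pauliVec_self hv, map_smul, LinearMap.smul_apply, dotProduct_smul, smul_eq_mul,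
    pauliVec_triple_product, re_star_dotProduct_fderiv_eq_zero hv hnorm, hunit]
  ring

lemma curvature_eq_triple_product_div {v : X → Fin 2 → ℂ} {η : X → Fin 3 → ℝ} {h : X → ℝ}
    {p : X} (hv : DifferentiableAt ℝ v p) (hh : DifferentiableAt ℝ h p) (hhp : h p ≠ 0)
    (hnorm : ∀ᶠ q in 𝓝 p, ∑ i, normSq (v q i) = 1)
    (heig : ∀ᶠ q in 𝓝 p, (∑ j, (η q j : ℂ) • pauli j) *ᵥ v q = (h q : ℂ) • v q) (a b : X) :
    -I * (star (fderiv ℝ v p a) ⬝ᵥ fderiv ℝ v p b - star (fderiv ℝ v p b) ⬝ᵥ fderiv ℝ v p a) =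
      ((η p ⬝ᵥ fderiv ℝ η p a ⨯₃ fderiv ℝ η p b / (2 * h p ^ 3) : ℝ) : ℂ) := by
  have hη : η =ᶠ[𝓝 p] fun q => h q • pauliVec (v q) (v q) := by
    filter_upwards [hnorm, heig] with q hq heq
    rw [← normSq_smul_eq_smul_pauliVec heq, hq, one_smul]
  have hdη (d : X) : fderiv ℝ η p d = fderiv ℝ h p d • pauliVec (v p) (v p) +
      h p • fderiv ℝ (fun q => pauliVec (v q) (v q)) p d := by
    rw [hη.fderiv_eq, fderiv_fun_smul hh (differentiableAt_pauliVec_self hv)]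
    simp [add_comm]
  rw [neg_I_mul_star_dotProduct_sub, hη.self_of_nhds, hdη, hdη, triple_product_smul_of_add_smul,
    pauliVec_triple_product_fderiv hv hnorm]
  congr 1
  field_simp
  ring

end Spinor

section Frame

variable {X : Type*} [NormedAddCommGroup X] [NormedSpace ℝ X] {m k n : Type*} [Fintype n]

open scoped Matrix.Norms.Operator in
lemma differentiableAt_mulVec [Finite m] {A : X → m → n → ℝ} {u : X → n → ℝ} {x : X}
    (hA : DifferentiableAt ℝ A x) (hu : DifferentiableAt ℝ u x) :
    DifferentiableAt ℝ (fun y => Matrix.of (A y) *ᵥ u y) x := by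
  have := Fintype.ofFinite m
  have hA' : DifferentiableAt ℝ (fun y => Matrix.of (A y)) x := hA
  let Φ : Matrix m n ℝ →ₗ[ℝ] (n → ℝ) →ₗ[ℝ] m → ℝ := mulVecBilin ℝ ℝ
  exact (Φ.toContinuousBilinearMap.hasFDerivAt_of_bilinear
    hA'.hasFDerivAt hu.hasFDerivAt).differentiableAt

open scoped Matrix.Norms.Operator in
lemma fderiv_mulVec [Finite m] {A : X → m → n → ℝ} {u : X → n → ℝ} {x : X}
    (hA : DifferentiableAt ℝ A x) (hu : DifferentiableAt ℝ u x) (d : X) :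
    fderiv ℝ (fun y => Matrix.of (A y) *ᵥ u y) x d =
      Matrix.of (fderiv ℝ A x d) *ᵥ u x + Matrix.of (A x) *ᵥ fderiv ℝ u x d := by
  have := Fintype.ofFinite m
  have hA' : DifferentiableAt ℝ (fun y => Matrix.of (A y)) x := hA
  let Φ : Matrix m n ℝ →ₗ[ℝ] (n → ℝ) →ₗ[ℝ] m → ℝ := mulVecBilin ℝ ℝ
  rw [add_comm]
  exact DFunLike.congr_fun (Φ.toContinuousBilinearMap.fderiv_of_bilinear hA' hu) d

lemma mul_transpose_fderiv_eq_neg {A : X → m → n → ℝ} {B : X → k → n → ℝ} {C : Matrix m k ℝ}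
    {x : X} (hA : DifferentiableAt ℝ A x) (hB : DifferentiableAt ℝ B x)
    (hAB : ∀ᶠ y in 𝓝 x, Matrix.of (A y) * (Matrix.of (B y))ᵀ = C) (d : X) :
    Matrix.of (A x) * (Matrix.of (fderiv ℝ B x d))ᵀ =
      -(Matrix.of (fderiv ℝ A x d) * (Matrix.of (B x))ᵀ) := by
  ext i j
  have hentry : (fun y => ∑ ν, A y i ν * B y j ν) =ᶠ[𝓝 x] fun _ => C i j := by
    filter_upwards [hAB] with y hy
    exact congrFun₂ hy i j
  have hleibniz := HasFDerivAt.fun_sum (u := Finset.univ) fun ν _ =>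
    (hasFDerivAt_pi'.1 (hasFDerivAt_pi'.1 hA.hasFDerivAt i) ν).mul
      (hasFDerivAt_pi'.1 (hasFDerivAt_pi'.1 hB.hasFDerivAt j) ν)
  have hzero := DFunLike.congr_fun
    (hleibniz.unique ((hasFDerivAt_const (C i j) x).congr_of_eventuallyEq hentry)) d
  rw [Matrix.neg_apply, eq_neg_iff_add_eq_zero]
  simpa [Matrix.mul_apply, Finset.sum_add_distrib, mul_comm] using hzero

open scoped Matrix.Norms.Operator in
lemma differentiableAt_of_mul_transpose_eq_one [DecidableEq n] {A B : X → n → n → ℝ} {x : X}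
    (hA : DifferentiableAt ℝ A x)
    (hAB : ∀ᶠ y in 𝓝 x, Matrix.of (A y) * (Matrix.of (B y))ᵀ = 1) : DifferentiableAt ℝ B x := by
  have hunit : IsUnit (Matrix.of (A x)) := IsUnit.of_mul_eq_one _ hAB.self_of_nhds
  have hA' : DifferentiableAt ℝ (fun y => Matrix.of (A y)) x := hA
  have hinv : DifferentiableAt ℝ (fun y => Ring.inverse (Matrix.of (A y))) x :=
    (differentiableAt_inverse hunit).comp x hA'
  have hB : B =ᶠ[𝓝 x] fun y j ν => Ring.inverse (Matrix.of (A y)) ν j := by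
    filter_upwards [hAB] with y hy
    rw [← nonsing_inv_eq_ringInverse, inv_eq_right_inv hy]
    rfl
  rw [hB.differentiableAt_iff, differentiableAt_pi]
  refine fun j => differentiableAt_pi.2 fun ν => ?_
  exact differentiableAt_pi.1 (differentiableAt_pi.1 hinv ν) j

end Frame

section Torsion

lemma sum_eps_mul_mul_sub (G : Matrix (Fin 3) (Fin 3) ℝ) (D : Fin 3 → Fin 3 → ℝ) (β : Fin 3) :
    ∑ γ, ∑ δ, ∑ μ, ∑ ν, eps γ δ β * G γ μ * G δ ν * (D μ ν - D ν μ) =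
      2 * ∑ μ, (G.col μ ⨯₃ (G *ᵥ D μ)) β := by
  fin_cases β <;> simp [Fin.sum_univ_three, eps, cross_apply, mulVec, dotProduct] <;> ring

variable (e f : (Fin 3 → ℝ) → Fin 3 → Fin 3 → ℝ) (x : Fin 3 → ℝ)

lemma gM_eq_transpose_mul : gM e x = (Matrix.of (e x))ᵀ * Matrix.of (e x) := rfl

lemma charge_mul_sqrt_det_mul_det (hdet : (Matrix.of (e x)).det ≠ 0) :
    charge e x * (√(gM e x)⁻¹.det * (Matrix.of (e x)).det) = 1 := by
  rw [charge, gM_eq_transpose_mul, det_nonsing_inv, Ring.inverse_eq_inv', det_mul, det_transpose,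
    Real.sqrt_inv, Real.sqrt_mul_self_eq_abs]
  rcases hdet.lt_or_gt with hneg | hpos
  · rw [Real.sign_of_neg hneg, abs_of_neg hneg]
    field_simp
  · rw [Real.sign_of_pos hpos, abs_of_pos hpos]
    field_simp

lemma sum_starT_mul_mul (ξ : Fin 3 → ℝ) :
    ∑ α, ∑ β, starT e f x α β * ξ α * ξ β =
      ∑ j, (Matrix.of (e x) *ᵥ ξ) j * ((gM e x *ᵥ ξ) ⬝ᵥ curlCoframe e f x j) := by
  have hsymm (α β : Fin 3) : gM e x α β = gM e x β α := by simp [gM, mul_comm]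
  simp only [starT, mulVec, dotProduct, Fin.sum_univ_three, of_apply, hsymm 1 0, hsymm 2 0,
    hsymm 2 1]
  ring

variable {e f x}

lemma curlCoframe_eq_sum_cross (hf : DifferentiableAt ℝ f x) (j : Fin 3) :
    curlCoframe e f x j = √(gM e x)⁻¹.det • ∑ μ,
      (gM e x).col μ ⨯₃ (gM e x *ᵥ fderiv ℝ f x (Pi.single μ 1) j) := by
  have hentry (μ ν : Fin 3) : fderiv ℝ (fun y => f y j ν) x (Pi.single μ 1) =
      fderiv ℝ f x (Pi.single μ 1) j ν := by
    rw [fderiv_apply (differentiableAt_pi.1 hf j) ν, fderiv_apply hf j]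
    rfl
  ext β
  simp only [curlCoframe, hentry]
  rw [sum_eps_mul_mul_sub (gM e x) fun μ => fderiv ℝ f x (Pi.single μ 1) j, Pi.smul_apply,
    Finset.sum_apply, smul_eq_mul]
  ring

lemma gM_mulVec_dotProduct_curlCoframe (hf : DifferentiableAt ℝ f x) (ξ : Fin 3 → ℝ)
    (j : Fin 3) :
    (gM e x *ᵥ ξ) ⬝ᵥ curlCoframe e f x j =
      √(gM e x)⁻¹.det * (Matrix.of (e x)).det * ∑ μ, (Matrix.of (e x) *ᵥ ξ) ⬝ᵥ
        (Matrix.of (e x)).col μ ⨯₃ (Matrix.of (e x) *ᵥ fderiv ℝ f x (Pi.single μ 1) j) := by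
  have hcol (μ : Fin 3) : (gM e x).col μ = (Matrix.of (e x))ᵀ *ᵥ (Matrix.of (e x)).col μ := rfl
  rw [curlCoframe_eq_sum_cross hf, dotProduct_smul, dotProduct_sum, smul_eq_mul, mul_assoc,
    Finset.mul_sum Finset.univ _ (Matrix.of (e x)).det]
  congr! 2 with μ
  rw [hcol, gM_eq_transpose_mul, ← mulVec_mulVec, ← mulVec_mulVec, triple_product_mulVec,
    det_transpose]

lemma sum_starT_mul_mul_eq_triple_product (hf : DifferentiableAt ℝ f x) (ξ : Fin 3 → ℝ) :
    ∑ α, ∑ β, starT e f x α β * ξ α * ξ β =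
      √(gM e x)⁻¹.det * (Matrix.of (e x)).det * ∑ μ, (Matrix.of (e x) *ᵥ ξ) ⬝ᵥ
        (Matrix.of (e x)).col μ ⨯₃ (Matrix.of (e x) *ᵥ
          ((Matrix.of (fderiv ℝ f x (Pi.single μ 1)))ᵀ *ᵥ (Matrix.of (e x) *ᵥ ξ))) := by
  simp only [sum_starT_mul_mul, gM_mulVec_dotProduct_curlCoframe hf, mul_left_comm _ (_ * _),
    ← Finset.mul_sum]
  congr 1
  simp only [Finset.mul_sum]
  rw [Finset.sum_comm]
  refine Finset.sum_congr rfl fun μ _ => ?_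
  have hcomb (D : Matrix (Fin 3) (Fin 3) ℝ) (η : Fin 3 → ℝ) : Dᵀ *ᵥ η = ∑ j, η j • D j := by
    rw [mulVec_transpose, vecMul_eq_sum]
  simp only [hcomb, mulVec_sum, mulVec_smul, map_sum, map_smul, dotProduct_sum, dotProduct_smul,
    smul_eq_mul]
  rfl

lemma charge_mul_sum_starT_mul_mul (he : DifferentiableAt ℝ e x)
    (hef : ∀ᶠ y in 𝓝 x, Matrix.of (e y) * (Matrix.of (f y))ᵀ = 1) (ξ : Fin 3 → ℝ) :
    charge e x * ∑ α, ∑ β, starT e f x α β * ξ α * ξ β =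
      ∑ μ, (Matrix.of (e x) *ᵥ ξ) ⬝ᵥ
        (Matrix.of (fderiv ℝ e x (Pi.single μ 1)) *ᵥ ξ) ⨯₃ (Matrix.of (e x)).col μ := by
  have hf := differentiableAt_of_mul_transpose_eq_one he hef
  have hdet : (Matrix.of (e x)).det ≠ 0 := det_ne_zero_of_right_inverse hef.self_of_nhds
  have hinv : (Matrix.of (f x))ᵀ * Matrix.of (e x) = 1 := mul_eq_one_comm.1 hef.self_of_nhds
  rw [sum_starT_mul_mul_eq_triple_product hf, ← mul_assoc, charge_mul_sqrt_det_mul_det e x hdet,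
    one_mul]
  refine Finset.sum_congr rfl fun μ _ => ?_
  rw [mulVec_mulVec, mul_transpose_fderiv_eq_neg he hf hef, neg_mulVec, ← mulVec_mulVec,
    mulVec_mulVec _ _ (Matrix.of (e x)), hinv, one_mulVec, map_neg, cross_anticomm]

end Torsion

section FrameMomentum

/-- The covector `ξ` in the frame `e`, with components `η_j = Σ_α e_j^α(x) ξ_α`, as a function of
the phase-space point `q = (x, ξ)`. -/
def frameMomentum (e : (Fin 3 → ℝ) → Fin 3 → Fin 3 → ℝ) (q : (Fin 3 → ℝ) × (Fin 3 → ℝ)) :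
    Fin 3 → ℝ :=
  Matrix.of (e q.1) *ᵥ q.2

lemma sum_smul_sum_smul_pauli_eq_frameMomentum (e : (Fin 3 → ℝ) → Fin 3 → Fin 3 → ℝ)
    (q : (Fin 3 → ℝ) × (Fin 3 → ℝ)) :
    ∑ α, (q.2 α : ℂ) • ∑ j, (e q.1 j α : ℂ) • pauli j =
      ∑ j, (frameMomentum e q j : ℂ) • pauli j := by
  simp only [frameMomentum, mulVec, dotProduct, of_apply, ofReal_sum, ofReal_mul, Finset.sum_smul,
    Finset.smul_sum, smul_smul]
  rw [Finset.sum_comm]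
  simp only [mul_comm]

lemma sum_gM_mul_mul_eq_frameMomentum_dotProduct_self (e : (Fin 3 → ℝ) → Fin 3 → Fin 3 → ℝ)
    (q : (Fin 3 → ℝ) × (Fin 3 → ℝ)) :
    ∑ α, ∑ β, gM e q.1 α β * q.2 α * q.2 β = frameMomentum e q ⬝ᵥ frameMomentum e q := by
  simp only [frameMomentum, gM, of_apply, mulVec, dotProduct, Fin.sum_univ_three]
  ring

variable {e : (Fin 3 → ℝ) → Fin 3 → Fin 3 → ℝ} {p : (Fin 3 → ℝ) × (Fin 3 → ℝ)}

lemma differentiableAt_frameMomentum (he : DifferentiableAt ℝ e p.1) :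
    DifferentiableAt ℝ (frameMomentum e) p :=
  differentiableAt_mulVec (he.comp p differentiableAt_fst) differentiableAt_snd

lemma fderiv_frameMomentum (he : DifferentiableAt ℝ e p.1) (a b : Fin 3 → ℝ) :
    fderiv ℝ (frameMomentum e) p (a, b) =
      Matrix.of (fderiv ℝ e p.1 a) *ᵥ p.2 + Matrix.of (e p.1) *ᵥ b := by
  refine (fderiv_mulVec (he.comp p differentiableAt_fst) differentiableAt_snd (a, b)).trans ?_
  rw [fderiv_comp p he differentiableAt_fst, fderiv_fst, fderiv_snd]
  rfl

lemma frameMomentum_dotProduct_self_pos (hdet : (Matrix.of (e p.1)).det ≠ 0) (hp : p.2 ≠ 0) :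
    0 < frameMomentum e p ⬝ᵥ frameMomentum e p :=
  dotProduct_star_self_pos_iff.2 fun h => hp (eq_zero_of_mulVec_eq_zero hdet h)

lemma curvature_eq_frameMomentum_triple_product_div
    {v : (Fin 3 → ℝ) × (Fin 3 → ℝ) → Fin 2 → ℂ} (he : DifferentiableAt ℝ e p.1)
    (hdet : (Matrix.of (e p.1)).det ≠ 0) (hv : DifferentiableAt ℝ v p) (hp : p.2 ≠ 0)
    (hnorm : ∀ᶠ q in 𝓝 p, ∑ i, normSq (v q i) = 1)
    (heig : ∀ᶠ q in 𝓝 p, (∑ j, (frameMomentum e q j : ℂ) • pauli j) *ᵥ v q =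
      (√(frameMomentum e q ⬝ᵥ frameMomentum e q) : ℂ) • v q) (a b : Fin 3 → ℝ) :
    -I * (star (fderiv ℝ v p (a, 0)) ⬝ᵥ fderiv ℝ v p (0, b) -
        star (fderiv ℝ v p (0, b)) ⬝ᵥ fderiv ℝ v p (a, 0)) =
      ((frameMomentum e p ⬝ᵥ
        (Matrix.of (fderiv ℝ e p.1 a) *ᵥ p.2) ⨯₃ (Matrix.of (e p.1) *ᵥ b) /
          (2 * (frameMomentum e p ⬝ᵥ frameMomentum e p) ^ ((3 : ℝ) / 2)) : ℝ) : ℂ) := by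
  have hpos := frameMomentum_dotProduct_self_pos hdet hp
  have hη (j : Fin 3) := differentiableAt_pi.1 (differentiableAt_frameMomentum he) j
  have hsqrt : DifferentiableAt ℝ (fun q => √(frameMomentum e q ⬝ᵥ frameMomentum e q)) p :=
    (DifferentiableAt.fun_sum fun j _ => (hη j).mul (hη j)).sqrt hpos.ne'
  have hcube : (frameMomentum e p ⬝ᵥ frameMomentum e p) ^ ((3 : ℝ) / 2) =
      √(frameMomentum e p ⬝ᵥ frameMomentum e p) ^ 3 := by
    rw [Real.sqrt_eq_rpow, ← Real.rpow_mul_natCast hpos.le]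
    norm_num
  rw [curvature_eq_triple_product_div hv hsqrt (Real.sqrt_pos.2 hpos).ne' hnorm heig,
    fderiv_frameMomentum he, fderiv_frameMomentum he, hcube]
  simp

end FrameMomentum

theorem u1_curvature_eq_torsion_general {e f : (Fin 3 → ℝ) → Fin 3 → Fin 3 → ℝ}
    {v : (Fin 3 → ℝ) × (Fin 3 → ℝ) → Fin 2 → ℂ} {p : (Fin 3 → ℝ) × (Fin 3 → ℝ)}
    (he : DifferentiableAt ℝ e p.1) (hv : DifferentiableAt ℝ v p) (hp : p.2 ≠ 0)
    (hef : ∀ᶠ y in 𝓝 p.1, ∀ j k, ∑ α, e y j α * f y k α = if j = k then (1 : ℝ) else 0)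
    (hnorm : ∀ᶠ q in 𝓝 p, ∑ i, normSq (v q i) = 1)
    (heig : ∀ᶠ q in 𝓝 p,
      (∑ α, (q.2 α : ℂ) • ∑ j, (e q.1 j α : ℂ) • pauli j) *ᵥ v q =
        (√(∑ α, ∑ β, gM e q.1 α β * q.2 α * q.2 β) : ℂ) • v q) :
    -I * ∑ α : Fin 3,
        ((∑ i, (starRingEnd ℂ) (fderiv ℝ (fun q => v q i) p (Pi.single α 1, 0)) *
            fderiv ℝ (fun q => v q i) p (0, Pi.single α 1)) -
          ∑ i, (starRingEnd ℂ) (fderiv ℝ (fun q => v q i) p (0, Pi.single α 1)) *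
            fderiv ℝ (fun q => v q i) p (Pi.single α 1, 0)) =
      ((charge e p.1 / 2 * ((∑ α, ∑ β, starT e f p.1 α β * p.2 α * p.2 β) /
        (∑ μ, ∑ ν, gM e p.1 μ ν * p.2 μ * p.2 ν) ^ ((3 : ℝ) / 2)) : ℝ) : ℂ) := by
  have hdual : ∀ᶠ y in 𝓝 p.1, Matrix.of (e y) * (Matrix.of (f y))ᵀ = 1 :=
    hef.mono fun y hy => Matrix.ext fun j k => (hy j k).trans one_apply.symm
  have hdet : (Matrix.of (e p.1)).det ≠ 0 := det_ne_zero_of_right_inverse hdual.self_of_nhds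
  simp only [sum_smul_sum_smul_pauli_eq_frameMomentum,
    sum_gM_mul_mul_eq_frameMomentum_dotProduct_self] at heig ⊢
  have hcurv := curvature_eq_frameMomentum_triple_product_div he hdet hv hp hnorm heig
  have hentry (i : Fin 2) (d : (Fin 3 → ℝ) × (Fin 3 → ℝ)) :
      fderiv ℝ (fun q => v q i) p d = fderiv ℝ v p d i :=
    DFunLike.congr_fun (fderiv_apply hv i) d
  set N := frameMomentum e p ⬝ᵥ frameMomentum e p
  calc _ = ∑ α : Fin 3, ((frameMomentum e p ⬝ᵥ
          (Matrix.of (fderiv ℝ e p.1 (Pi.single α 1)) *ᵥ p.2) ⨯₃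
            (Matrix.of (e p.1) *ᵥ Pi.single α 1) / (2 * N ^ ((3 : ℝ) / 2)) : ℝ) : ℂ) := by
        simp only [Finset.mul_sum, hentry, ← hcurv]
        rfl
    _ = ((charge e p.1 * (∑ α, ∑ β, starT e f p.1 α β * p.2 α * p.2 β) /
          (2 * N ^ ((3 : ℝ) / 2)) : ℝ) : ℂ) := by
        rw [charge_mul_sum_starT_mul_mul he hdual, Finset.sum_div, ofReal_sum]
        simp only [mulVec_single_one, frameMomentum]
    _ = _ := by
        congr 1
        ring

/-- Lemma 4.1: the scalar curvature of the U(1) connection generated by the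
positive eigenspace of the principal symbol is expressed via the torsion of the teleparallel
connection, the metric and the topological charge. -/
theorem u1_curvature_eq_torsion
    (U : Set (Fin 3 → ℝ)) (hU : IsOpen U)
    (e : (Fin 3 → ℝ) → Fin 3 → Fin 3 → ℝ)
    (he : ∀ j α, ContDiffOn ℝ 1 (fun x => e x j α) U)
    (hli : ∀ x ∈ U, LinearIndependent ℝ (e x))
    (f : (Fin 3 → ℝ) → Fin 3 → Fin 3 → ℝ)
    (hf : ∀ x ∈ U, ∀ j k, ∑ α, e x j α * f x k α = if j = k then (1 : ℝ) else 0)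
    (V : Set ((Fin 3 → ℝ) × (Fin 3 → ℝ))) (hV : IsOpen V)
    (hVU : V ⊆ U ×ˢ {ξ : Fin 3 → ℝ | ξ ≠ 0})
    (v : ((Fin 3 → ℝ) × (Fin 3 → ℝ)) → Fin 2 → ℂ)
    (hv : ∀ i, ContDiffOn ℝ 1 (fun p => v p i) V)
    (hnorm : ∀ p ∈ V, ∑ i, Complex.normSq (v p i) = 1)
    (heig : ∀ p ∈ V,
      (∑ α, (p.2 α : ℂ) • (∑ j, (e p.1 j α : ℂ) • pauli j)).mulVec (v p)
        = ((Real.sqrt (∑ α, ∑ β, gM e p.1 α β * p.2 α * p.2 β) : ℝ) : ℂ) • v p) :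
    ∀ p ∈ V,
      -Complex.I * ∑ α : Fin 3,
          ((∑ i, (starRingEnd ℂ) (fderiv ℝ (fun q => v q i) p (Pi.single α 1, 0))
                * fderiv ℝ (fun q => v q i) p (0, Pi.single α 1))
            - (∑ i, (starRingEnd ℂ) (fderiv ℝ (fun q => v q i) p (0, Pi.single α 1))
                * fderiv ℝ (fun q => v q i) p (Pi.single α 1, 0)))
        = (((charge e p.1 / 2)
            * ((∑ α, ∑ β, starT e f p.1 α β * p.2 α * p.2 β)
                / (∑ μ, ∑ ν, gM e p.1 μ ν * p.2 μ * p.2 ν) ^ ((3 : ℝ) / 2)) : ℝ) : ℂ) := by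
  intro p hp
  have hpU : p.1 ∈ U := (hVU hp).1
  have he' : DifferentiableAt ℝ e p.1 := differentiableAt_pi.2 fun j => differentiableAt_pi.2
    fun α => ((he j α).contDiffAt (hU.mem_nhds hpU)).differentiableAt one_ne_zero
  have hv' : DifferentiableAt ℝ v p := differentiableAt_pi.2
    fun i => ((hv i).contDiffAt (hV.mem_nhds hp)).differentiableAt one_ne_zero
  exact u1_curvature_eq_torsion_general he' hv' (hVU hp).2 (eventually_of_mem (hU.mem_nhds hpU) hf)
    (eventually_of_mem (hV.mem_nhds hp) hnorm) (eventually_of_mem (hV.mem_nhds hp) heig)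

end
end

section
/- Let σ¹, σ², σ³ be trace-free Hermitian 2×2 complex matrices and define vectors e₁, e₂, e₃ ∈ ℝ³ by e₁^α := Re((σ^α)₁₂), e₂^α := −Im((σ^α)₁₂), e₃^α := (σ^α)₁₁ for α = 1,2,3 (the (1,1) entry of a trace-free Hermitian matrix is real). Then the ellipticity condition det(Σ_{α} ξ_α σ^α) ≠ 0 for all ξ ∈ ℝ³ \ {0} holds if and only if e₁, e₂, e₃ are linearly independent in ℝ³; and in that case the quadratic form ξ ↦ −det(Σ_α ξ_α σ^α) is positive definite. -/
open Complex Matrix BigOperators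

noncomputable section

/-!
In the basis of Pauli matrices the determinant is minus the squared Euclidean norm. The symbol at
`ξ` has Pauli coefficients `E ξ`, where `E` has rows `e₁, e₂, e₃`, so `-det A₁(ξ) = |E ξ|²`, and
ellipticity says that `E` is injective.
-/

theorem det_sum_smul_pauli (c : Fin 3 → ℂ) :
    (∑ j, c j • pauli j).det = -(c ⬝ᵥ c) := by
  have hentries : ∑ j, c j • pauli j =
      !![c 2, c 0 - c 1 * I; c 0 + c 1 * I, -c 2] := by
    simp [pauli, Fin.sum_univ_three, sub_eq_add_neg]
  rw [hentries, det_fin_two_of, dotProduct, Fin.sum_univ_three]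
  linear_combination c 1 ^ 2 * I_sq

theorem eq_sum_re_im_smul_pauli {M : Matrix (Fin 2) (Fin 2) ℂ} (hM : M.IsHermitian)
    (htr : M.trace = 0) :
    M = ∑ j, ![(M 0 1).re, -(M 0 1).im, (M 0 0).re] j • pauli j := by
  have h00 : ((M 0 0).re : ℂ) = M 0 0 := hM.coe_re_apply_self 0
  have h10 : M 1 0 = star (M 0 1) := (hM.apply 1 0).symm
  have h11 : M 1 1 = -M 0 0 := by rw [trace_fin_two] at htr; linear_combination htr
  ext i k
  fin_cases i <;> fin_cases k <;>
    simp [pauli, Fin.sum_univ_three, h00, h10, h11, Complex.ext_iff]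

theorem sum_smul_sum_smul_eq_sum_mulVec_smul {R V m n : Type*} [CommSemiring R]
    [AddCommMonoid V] [Module R V] [Fintype m] [Fintype n] (A : Matrix m n R) (x : n → R)
    (v : m → V) :
    ∑ k, x k • ∑ j, A j k • v j = ∑ j, (A *ᵥ x) j • v j := by
  simp only [mulVec, dotProduct, Finset.smul_sum, Finset.sum_smul, smul_smul, mul_comm (x _)]
  exact Finset.sum_comm

theorem neg_det_sum_smul_eq_dotProduct_mulVec {ι : Type*} [Fintype ι]
    {σ : ι → Matrix (Fin 2) (Fin 2) ℂ} {E : Matrix (Fin 3) ι ℝ}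
    (hσ : ∀ α, σ α = ∑ j, E j α • pauli j) (ξ : ι → ℝ) :
    -(∑ α, (ξ α : ℂ) • σ α).det = ((E *ᵥ ξ ⬝ᵥ E *ᵥ ξ : ℝ) : ℂ) := by
  have hsymbol : ∑ α, (ξ α : ℂ) • σ α = ∑ j, ((E *ᵥ ξ) j : ℂ) • pauli j := by
    simp only [hσ, coe_smul]
    exact sum_smul_sum_smul_eq_sum_mulVec_smul E ξ pauli
  rw [hsymbol, det_sum_smul_pauli, neg_neg]
  simp [dotProduct]

theorem ellipticity_iff_frame_linearIndependent_general {ι : Type*} [Fintype ι]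
    (σ : ι → Matrix (Fin 2) (Fin 2) ℂ)
    (hherm : ∀ α, (σ α).IsHermitian) (htr : ∀ α, (σ α).trace = 0)
    (e : Fin 3 → ι → ℝ)
    (he0 : ∀ α, e 0 α = (σ α 0 1).re)
    (he1 : ∀ α, e 1 α = -(σ α 0 1).im)
    (he2 : ∀ α, e 2 α = (σ α 0 0).re) :
    ((∀ ξ : ι → ℝ, ξ ≠ 0 → (∑ α, (ξ α : ℂ) • σ α).det ≠ 0)
        ↔ LinearIndependent ℝ (of e).col)
    ∧ ((∀ ξ : ι → ℝ, ξ ≠ 0 → (∑ α, (ξ α : ℂ) • σ α).det ≠ 0) →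
        ∀ ξ : ι → ℝ, ξ ≠ 0 →
          ∃ q : ℝ, 0 < q ∧ -(∑ α, (ξ α : ℂ) • σ α).det = (q : ℂ)) := by
  have hσ : ∀ α, σ α = ∑ j, of e j α • pauli j := fun α => by
    simpa [Fin.sum_univ_three, he0, he1, he2] using eq_sum_re_im_smul_pauli (hherm α) (htr α)
  have hdet := neg_det_sum_smul_eq_dotProduct_mulVec hσ
  have hdet_ne : ∀ ξ : ι → ℝ, (∑ α, (ξ α : ℂ) • σ α).det ≠ 0 ↔ of e *ᵥ ξ ≠ 0 := fun ξ => by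
    rw [← neg_ne_zero, hdet, ofReal_ne_zero, Ne, dotProduct_self_eq_zero]
  constructor
  · rw [← mulVec_injective_iff, ← coe_mulVecLin, injective_iff_map_eq_zero]
    simp only [hdet_ne, mulVecLin_apply, ne_eq, not_imp_not]
  · intro hell ξ hξ
    exact ⟨_, dotProduct_star_self_pos_iff.2 ((hdet_ne ξ).1 (hell ξ hξ)), hdet ξ⟩

/-- ellipticity of a trace-free Hermitian principal symbol is equivalent to
linear independence of the encoded frame, and then −det A₁(ξ) is positive definite. -/
theorem ellipticity_iff_frame_linearIndependent
    (σ : Fin 3 → Matrix (Fin 2) (Fin 2) ℂ)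
    (hherm : ∀ α, (σ α).IsHermitian) (htr : ∀ α, (σ α).trace = 0)
    (e : Fin 3 → Fin 3 → ℝ)
    (he0 : ∀ α, e 0 α = (σ α 0 1).re)
    (he1 : ∀ α, e 1 α = -(σ α 0 1).im)
    (he2 : ∀ α, e 2 α = (σ α 0 0).re) :
    ((∀ ξ : Fin 3 → ℝ, ξ ≠ 0 → (∑ α, (ξ α : ℂ) • σ α).det ≠ 0)
        ↔ LinearIndependent ℝ e)
    ∧ ((∀ ξ : Fin 3 → ℝ, ξ ≠ 0 → (∑ α, (ξ α : ℂ) • σ α).det ≠ 0) →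
        ∀ ξ : Fin 3 → ℝ, ξ ≠ 0 →
          ∃ q : ℝ, 0 < q ∧ -(∑ α, (ξ α : ℂ) • σ α).det = (q : ℂ)) := by
  have hrow_col : LinearIndependent ℝ e ↔ LinearIndependent ℝ (of e).col :=
    (linearIndependent_rows_iff_isUnit (A := of e)).trans linearIndependent_cols_iff_isUnit.symm
  rw [hrow_col]
  exact ellipticity_iff_frame_linearIndependent_general σ hherm htr e he0 he1 he2

end
end

section
/- Let U ⊆ ℝ³ be open, let e_j : U → ℝ³ (j = 1,2,3) be a differentiable frame (pointwise linearly independent), let the coframe e^k be defined by Σ_α e_j^α e^k_α = δ_j^k, let g_{βγ}(x) := Σ_{k=1}^{3} e^k_β(x) e^k_γ(x) (the inverse matrix of g^{αβ} = Σ_j e_j^α e_j^β), and let Γ^α_{μβ} := Σ_k e_k^α ∂e^k_β/∂x^μ be the teleparallel connection coefficients. Then the teleparallel connection is metric compatible: for all α, β, γ, ∂g_{βγ}/∂x^α − Σ_δ Γ^δ_{αβ} g_{δγ} − Σ_δ Γ^δ_{αγ} g_{βδ} = 0 on U. -/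
open BigOperators

noncomputable section

/-!
The coframe is the inverse transpose of the frame, so it inherits differentiability, and duality
collapses `Σ_δ Γ^δ_{vβ} e^k_δ` to `∂_v e^k_β`: every covector field `e^k` is parallel. As `g` is a
sum of squares of parallel covector fields, the two connection terms cancel the two summands that
the Leibniz rule produces from `∂_v g_{βγ}`.
-/

open Filter Topology

section MatrixDifferentiability

variable {𝕜 E n : Type*} [NontriviallyNormedField 𝕜] [NormedAddCommGroup E] [NormedSpace 𝕜 E]
  [Fintype n] [DecidableEq n] {A B : E → Matrix n n 𝕜} {x : E}

lemma differentiableAt_matrix_det (hA : ∀ i j, DifferentiableAt 𝕜 (fun y => A y i j) x) :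
    DifferentiableAt 𝕜 (fun y => (A y).det) x := by
  simp only [Matrix.det_apply']
  fun_prop

lemma differentiableAt_matrix_adjugate_apply (hA : ∀ i j, DifferentiableAt 𝕜 (fun y => A y i j) x)
    (i j : n) : DifferentiableAt 𝕜 (fun y => (A y).adjugate i j) x := by
  simp only [Matrix.adjugate_apply]
  refine differentiableAt_matrix_det fun k l => ?_
  by_cases hk : k = j
  · simp [hk]
  · simpa [hk] using hA k l

lemma differentiableAt_of_eventually_matrix_mul_eq_one
    (hA : ∀ i j, DifferentiableAt 𝕜 (fun y => A y i j) x) (hAB : ∀ᶠ y in 𝓝 x, A y * B y = 1)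
    (i j : n) : DifferentiableAt 𝕜 (fun y => B y i j) x := by
  have hdet : (A x).det ≠ 0 := Matrix.det_ne_zero_of_right_inverse hAB.self_of_nhds
  have hcramer : (fun y => B y i j) =ᶠ[𝓝 x] fun y => (A y).det⁻¹ * (A y).adjugate i j := by
    filter_upwards [hAB] with y hy
    rw [← Matrix.inv_eq_right_inv hy, Matrix.inv_def, Ring.inverse_eq_inv', Matrix.smul_apply,
      smul_eq_mul]
  exact (((differentiableAt_matrix_det hA).fun_inv hdet).fun_mul
    (differentiableAt_matrix_adjugate_apply hA i j)).congr_of_eventuallyEq hcramer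

end MatrixDifferentiability

section Coframe

variable {R X ι κ : Type*} [CommSemiring R]

/-- The coframe `f` is dual to the frame `e`: `Σ_α e_j^α e^k_α = δ_j^k`. The coframe is stored as
`f k α`, with the label `k` first, just as the frame is. The type `κ` of labels and the type `ι` of
component indices need not agree. -/
def IsDualCoframe [Fintype ι] [DecidableEq κ] (e f : κ → ι → R) : Prop :=
  ∀ j k, ∑ α, e j α * f k α = if j = k then 1 else 0

/-- The metric `g_{βγ} = Σ_k e^k_β e^k_γ` for which the coframe field `f` is orthonormal. -/
def coframeMetric [Fintype κ] (f : X → κ → ι → R) (x : X) (β γ : ι) : R :=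
  ∑ k, f x k β * f x k γ

lemma coframeMetric_comm [Fintype κ] (f : X → κ → ι → R) (x : X) (β γ : ι) :
    coframeMetric f x β γ = coframeMetric f x γ β :=
  Finset.sum_congr rfl fun _ _ => mul_comm _ _

lemma IsDualCoframe.mul_transpose_eq_one [Fintype ι] [DecidableEq ι] {e f : ι → ι → R}
    (hef : IsDualCoframe e f) : Matrix.of e * (Matrix.of f).transpose = 1 := by
  ext j k
  simpa [Matrix.mul_apply, Matrix.one_apply] using hef j k

end Coframe

section Teleparallel

variable {𝕜 E ι κ : Type*} [NontriviallyNormedField 𝕜] [NormedAddCommGroup E] [NormedSpace 𝕜 E]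

lemma differentiableAt_coframe [Fintype ι] [DecidableEq ι] {e f : E → ι → ι → 𝕜} {x : E}
    (he : ∀ j α, DifferentiableAt 𝕜 (fun y => e y j α) x)
    (hef : ∀ᶠ y in 𝓝 x, IsDualCoframe (e y) (f y)) (k α : ι) :
    DifferentiableAt 𝕜 (fun y => f y k α) x :=
  differentiableAt_of_eventually_matrix_mul_eq_one (A := fun y => Matrix.of (e y))
    (B := fun y => (Matrix.of (f y)).transpose) he
    (hef.mono fun _ hy => hy.mul_transpose_eq_one) α k

/-- The coefficients `Γ^δ_{vβ} = Σ_k e_k^δ ∂_v e^k_β` at `x` of the teleparallel connection of the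
frame `e` with coframe `f`. The differentiation index is replaced by a vector `v`; the paper's
`Γ^δ_{μβ}` is the case where `v` is the `μ`-th coordinate vector. -/
def teleparallelCoeff [Fintype κ] (e f : E → κ → ι → 𝕜) (x v : E) (δ β : ι) : 𝕜 :=
  ∑ k, e x k δ * fderiv 𝕜 (fun y => f y k β) x v

/-- The covariant derivative `∇_v g_{βγ} = ∂_v g_{βγ} - Γ^δ_{vβ} g_{δγ} - Γ^δ_{vγ} g_{βδ}` at `x`
of a covariant 2-tensor field, where `Γ δ β` stands for `Γ^δ_{vβ}` at `x`. -/
def covariantDeriv [Fintype ι] (Γ : ι → ι → 𝕜) (g : E → ι → ι → 𝕜) (x v : E) (β γ : ι) : 𝕜 :=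
  fderiv 𝕜 (fun y => g y β γ) x v - ∑ δ, Γ δ β * g x δ γ - ∑ δ, Γ δ γ * g x β δ

lemma fderiv_coframeMetric [Fintype κ] {f : E → κ → ι → 𝕜} {x : E}
    (hf : ∀ k α, DifferentiableAt 𝕜 (fun y => f y k α) x) (v : E) (β γ : ι) :
    fderiv 𝕜 (fun y => coframeMetric f y β γ) x v =
      ∑ k, fderiv 𝕜 (fun y => f y k β) x v * f x k γ +
        ∑ k, fderiv 𝕜 (fun y => f y k γ) x v * f x k β := by
  simp only [coframeMetric]
  rw [fderiv_fun_sum fun k _ => (hf k β).fun_mul (hf k γ), ← Finset.sum_add_distrib,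
    sum_apply]
  refine Finset.sum_congr rfl fun k _ => ?_
  rw [fderiv_fun_mul (hf k β) (hf k γ)]
  simp only [add_apply, smul_apply, smul_eq_mul]
  ring

section ParallelCoframe

variable [Fintype ι] [Fintype κ] [DecidableEq κ] {e f : E → κ → ι → 𝕜} {x : E}

lemma sum_teleparallelCoeff_mul_coframe (hef : IsDualCoframe (e x) (f x)) (v : E) (k : κ) (β : ι) :
    ∑ δ, teleparallelCoeff e f x v δ β * f x k δ = fderiv 𝕜 (fun y => f y k β) x v := by
  calc ∑ δ, teleparallelCoeff e f x v δ β * f x k δ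
      = ∑ j, (∑ δ, e x j δ * f x k δ) * fderiv 𝕜 (fun y => f y j β) x v := by
        simp only [teleparallelCoeff, Finset.sum_mul]
        rw [Finset.sum_comm]
        simp only [mul_right_comm]
    _ = fderiv 𝕜 (fun y => f y k β) x v := by simp [hef _ k]

lemma sum_teleparallelCoeff_mul_coframeMetric (hef : IsDualCoframe (e x) (f x)) (v : E)
    (β γ : ι) :
    ∑ δ, teleparallelCoeff e f x v δ β * coframeMetric f x δ γ =
      ∑ k, fderiv 𝕜 (fun y => f y k β) x v * f x k γ := by
  simp only [← sum_teleparallelCoeff_mul_coframe hef, coframeMetric, Finset.mul_sum,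
    Finset.sum_mul, mul_assoc]
  exact Finset.sum_comm

lemma covariantDeriv_coframeMetric_eq_zero (hf : ∀ k α, DifferentiableAt 𝕜 (fun y => f y k α) x)
    (hef : IsDualCoframe (e x) (f x)) (v : E) (β γ : ι) :
    covariantDeriv (teleparallelCoeff e f x v) (coframeMetric f) x v β γ = 0 := by
  simp only [covariantDeriv, coframeMetric_comm f x β]
  rw [fderiv_coframeMetric hf, sum_teleparallelCoeff_mul_coframeMetric hef,
    sum_teleparallelCoeff_mul_coframeMetric hef, add_sub_cancel_left, sub_self]

end ParallelCoframe

theorem teleparallel_connection_metric_compatible_general [Fintype ι] [DecidableEq ι]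
    {e f : E → ι → ι → 𝕜} {x : E} (he : ∀ j α, DifferentiableAt 𝕜 (fun y => e y j α) x)
    (hef : ∀ᶠ y in 𝓝 x, IsDualCoframe (e y) (f y)) (v : E) (β γ : ι) :
    covariantDeriv (teleparallelCoeff e f x v) (coframeMetric f) x v β γ = 0 :=
  covariantDeriv_coframeMetric_eq_zero (differentiableAt_coframe he hef) hef.self_of_nhds v β γ

end Teleparallel

/-- the teleparallel connection Γ^α_{μβ} = Σ_k e_k^α ∂e^k_β/∂x^μ is metric
compatible: ∇_α g_{βγ} = ∂_α g_{βγ} − Γ^δ_{αβ} g_{δγ} − Γ^δ_{αγ} g_{βδ} = 0. -/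
theorem teleparallel_connection_metric_compatible
    (U : Set (Fin 3 → ℝ)) (hU : IsOpen U)
    (e : (Fin 3 → ℝ) → Fin 3 → Fin 3 → ℝ)
    (hdiff : ∀ j α, DifferentiableOn ℝ (fun x => e x j α) U)
    (hli : ∀ x ∈ U, LinearIndependent ℝ (e x))
    (f : (Fin 3 → ℝ) → Fin 3 → Fin 3 → ℝ)
    (hf : ∀ x ∈ U, ∀ j k, ∑ α, e x j α * f x k α = if j = k then (1 : ℝ) else 0) :
    ∀ x ∈ U, ∀ a β γ,
      fderiv ℝ (fun y => ∑ k, f y k β * f y k γ) x (Pi.single a 1)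
        - ∑ δ, (∑ k, e x k δ * fderiv ℝ (fun y => f y k β) x (Pi.single a 1)) * (∑ k, f x k δ * f x k γ)
        - ∑ δ, (∑ k, e x k δ * fderiv ℝ (fun y => f y k γ) x (Pi.single a 1)) * (∑ k, f x k β * f x k δ) = 0 :=
  fun _ hx a β γ => teleparallel_connection_metric_compatible_general
    (fun j α => (hdiff j α).differentiableAt (hU.mem_nhds hx))
    (eventually_of_mem (hU.mem_nhds hx) hf) (Pi.single a 1) β γ

end
end
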